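/- Let C be a nonempty closed convex subset of a real Hilbert space H, let T : C → C be a nonexpansive mapping, and let S : C → C be a k-strictly pseudocontractive mapping (0 ≤ k < 1) such that F(T) ∩ F(S) ≠ ∅. Let {λ_n} ⊂ [a, b] for some a, b with 0 < a ≤ b < 1 − k and {α_n} ⊂ [c, d] for some c, d with 0 < c ≤ d < 1. Given x₀ ∈ C, define y_n = α_n x_n + (1 − α_n) T((1 − λ_n) x_n + λ_n S x_n) and x_{n+1} = T((1 − λ_n) y_n + λ_n S y_n). Then {x_n} converges weakly to a point p ∈ F(T) ∩ F(S), and p = lim_{n→∞} P_{F(T)∩F(S)} x_n (strong limit). -/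

import Mathlib

open scoped RealInnerProductSpace
open Filter Topology

/-!
For every common fixed point `p`, one step of the scheme decreases `‖x n - p‖ ^ 2` by at least a
fixed multiple of `‖x n - S (x n)‖ ^ 2 + ‖x n - T (x n)‖ ^ 2`. Hence `x` is Fejér monotone with
respect to `F = F(T) ∩ F(S)` and both residuals tend to `0`, so by demiclosedness of `I - S` and
`I - T` every weak cluster point of `x` lies in `F`.

Fejér monotonicity alone makes the projections `PF (x n)` a Cauchy sequence, say with limit `p`. If
`q ∈ F` is a weak cluster point, then passing to the limit in the variational inequality
`⟪x n - PF (x n), q - PF (x n)⟫ ≤ 0` gives `‖q - p‖ ^ 2 ≤ 0`. So `p` is the only weak cluster point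
of the bounded sequence `x`.
-/

section Sequences

theorem cauchySeq_of_dist_sq_le_sub {X : Type*} [PseudoMetricSpace X] {z : ℕ → X} {D : ℕ → ℝ}
    (hD : ∀ n, 0 ≤ D n) (h : ∀ m n, m ≤ n → dist (z m) (z n) ^ 2 ≤ D m - D n) : CauchySeq z := by
  have hanti : Antitone D := fun m n hmn => sub_nonneg.1 ((sq_nonneg _).trans (h m n hmn))
  have hbdd : BddBelow (Set.range D) := ⟨0, Set.forall_mem_range.2 hD⟩
  have hlim : Tendsto (fun n => √(D n - ⨅ i, D i)) atTop (𝓝 0) := by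
    simpa using ((tendsto_atTop_ciInf hanti hbdd).sub_const (⨅ i, D i)).sqrt
  refine cauchySeq_of_le_tendsto_0' _ (fun m n hmn => Real.le_sqrt_of_sq_le ?_) hlim
  exact (h m n hmn).trans (sub_le_sub_left (ciInf_le hbdd n) _)

theorem tendsto_zero_of_mul_norm_sq_le_sub {E : Type*} [SeminormedAddCommGroup E] {r : ℕ → E}
    {D : ℕ → ℝ} {m : ℝ} (hm : 0 < m) (hD : ∀ n, 0 ≤ D n)
    (h : ∀ n, m * ‖r n‖ ^ 2 ≤ D n - D (n + 1)) : Tendsto r atTop (𝓝 0) := by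
  have hsum : Summable fun n => m * ‖r n‖ ^ 2 := by
    refine summable_of_sum_range_le (c := D 0) (fun n => by positivity) fun n => ?_
    calc ∑ i ∈ Finset.range n, m * ‖r i‖ ^ 2
        ≤ ∑ i ∈ Finset.range n, (D i - D (i + 1)) := Finset.sum_le_sum fun i _ => h i
      _ = D 0 - D n := Finset.sum_range_sub' D n
      _ ≤ D 0 := sub_le_self _ (hD n)
  have hsq : Tendsto (fun n => ‖r n‖ ^ 2) atTop (𝓝 0) :=
    ((summable_mul_left_iff hm.ne').1 hsum).tendsto_atTop_zero
  refine tendsto_zero_iff_norm_tendsto_zero.2 ?_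
  simpa using hsq.sqrt

end Sequences

section Weak

variable {H : Type*} [NormedAddCommGroup H] [InnerProductSpace ℝ H]
variable {ι : Type*} {l : Filter ι} {x y : ι → H} {q v : H} {C : Set H}

/-- Weak convergence of `x` to `q` along the filter `l`, tested against inner products; in a Hilbert
space these are all the continuous linear functionals. -/
def TendstoWeakly (x : ι → H) (l : Filter ι) (q : H) : Prop :=
  ∀ u : H, Tendsto (fun i => ⟪x i, u⟫) l (𝓝 ⟪q, u⟫)

theorem TendstoWeakly.inner_of_isBoundedUnder (hx : TendstoWeakly x l q)
    (hbdd : l.IsBoundedUnder (· ≤ ·) (norm ∘ x)) (hy : Tendsto y l (𝓝 v)) :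
    Tendsto (fun i => ⟪x i, y i⟫) l (𝓝 ⟪q, v⟫) := by
  have hzero : Tendsto (fun i => ⟪y i - v, x i⟫) l (𝓝 0) :=
    (tendsto_sub_nhds_zero_iff.2 hy).op_zero_isBoundedUnder_le hbdd _ norm_inner_le_norm
  have hsum := hzero.add (hx v)
  rw [zero_add] at hsum
  refine hsum.congr fun i => ?_
  rw [real_inner_comm, inner_sub_right, sub_add_cancel]

theorem TendstoWeakly.mem_of_isClosed_of_convex [CompleteSpace H] [l.NeBot]
    (hx : TendstoWeakly x l q) (hcl : IsClosed C) (hcv : Convex ℝ C) (hmem : ∀ᶠ i in l, x i ∈ C) :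
    q ∈ C := by
  by_contra hq
  obtain ⟨f, s, hfq, hfC⟩ := geometric_hahn_banach_point_closed hcv hcl hq
  have hf : ∀ z, f z = ⟪z, (InnerProductSpace.toDual ℝ H).symm f⟫ := fun z => by
    rw [real_inner_comm, InnerProductSpace.toDual_symm_apply]
  have hlim : Tendsto (fun i => f (x i)) l (𝓝 (f q)) := by
    simpa only [hf] using hx _
  exact hfq.not_ge (ge_of_tendsto hlim (hmem.mono fun i hi => (hfC _ hi).le))

theorem exists_tendstoWeakly_of_isBoundedUnder [CompleteSpace H] (U : Ultrafilter ι)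
    (hbdd : (U : Filter ι).IsBoundedUnder (· ≤ ·) (norm ∘ x)) : ∃ q, TendstoWeakly x U q := by
  obtain ⟨M, hM⟩ := hbdd
  let φ : ι → WeakDual ℝ H := fun i => StrongDual.toWeakDual (InnerProductSpace.toDual ℝ H (x i))
  have hφ : ∀ᶠ i in (U : Filter ι),
      φ i ∈ WeakDual.toStrongDual ⁻¹' Metric.closedBall (0 : StrongDual ℝ H) M := by
    refine (eventually_map.1 hM).mono fun i hi => ?_
    simpa [φ] using hi
  obtain ⟨f, -, hf⟩ :=
    (WeakDual.isCompact_closedBall (𝕜 := ℝ) (0 : StrongDual ℝ H) M).ultrafilter_le_nhds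
      (U.map φ) (le_principal_iff.2 hφ)
  refine ⟨(InnerProductSpace.toDual ℝ H).symm (WeakDual.toStrongDual f), fun u => ?_⟩
  rw [InnerProductSpace.toDual_symm_apply]
  exact ((WeakDual.eval_continuous u).tendsto f).comp hf

end Weak

section Projection

/-- `P` is a metric projection onto `F`: it sends each point to a nearest point of `F`. -/
def IsMetricProjection {E : Type*} [SeminormedAddCommGroup E] (P : E → E) (F : Set E) : Prop :=
  ∀ u, P u ∈ F ∧ ∀ w ∈ F, ‖u - P u‖ ≤ ‖u - w‖

variable {H : Type*} [NormedAddCommGroup H] [InnerProductSpace ℝ H] {F : Set H} {P : H → H}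

theorem IsMetricProjection.inner_sub_sub_nonpos (hP : IsMetricProjection P F) (hF : Convex ℝ F)
    (u : H) {w : H} (hw : w ∈ F) : ⟪u - P u, w - P u⟫ ≤ 0 := by
  obtain ⟨hPu, hmin⟩ := hP u
  have : Nonempty F := ⟨⟨P u, hPu⟩⟩
  have hbdd : BddBelow (Set.range fun z : F => ‖u - z‖) :=
    ⟨0, Set.forall_mem_range.2 fun _ => norm_nonneg _⟩
  refine (norm_eq_iInf_iff_real_inner_le_zero hF hPu).1 (le_antisymm ?_ ?_) w hw
  · exact le_ciInf fun z => hmin z z.2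
  · exact ciInf_le hbdd ⟨P u, hPu⟩

theorem IsMetricProjection.norm_sub_sq_add_norm_sub_sq_le (hP : IsMetricProjection P F)
    (hF : Convex ℝ F) (u : H) {w : H} (hw : w ∈ F) :
    ‖u - P u‖ ^ 2 + ‖w - P u‖ ^ 2 ≤ ‖u - w‖ ^ 2 := by
  have hinner := hP.inner_sub_sub_nonpos hF u hw
  rw [← sub_sub_sub_cancel_right u w (P u), norm_sub_sq_real (u - P u)]
  linarith

end Projection

section Fejer

/-- Fejér monotonicity of the sequence `x` with respect to `F`: no step increases the distance to
any point of `F`. -/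
def IsFejerMonotone {X : Type*} [PseudoMetricSpace X] (x : ℕ → X) (F : Set X) : Prop :=
  ∀ p ∈ F, ∀ n, dist (x (n + 1)) p ≤ dist (x n) p

namespace IsFejerMonotone

theorem antitone_dist {X : Type*} [PseudoMetricSpace X] {x : ℕ → X} {F : Set X}
    (hx : IsFejerMonotone x F) {p : X} (hp : p ∈ F) : Antitone fun n => dist (x n) p :=
  antitone_nat_of_succ_le (hx p hp)

variable {E : Type*} [SeminormedAddCommGroup E] {x : ℕ → E} {F : Set E}

theorem of_norm_sq_le_sub {e : ℕ → ℝ} (he : ∀ n, 0 ≤ e n)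
    (h : ∀ p ∈ F, ∀ n, ‖x (n + 1) - p‖ ^ 2 ≤ ‖x n - p‖ ^ 2 - e n) : IsFejerMonotone x F := by
  intro p hp n
  rw [dist_eq_norm, dist_eq_norm, ← sq_le_sq₀ (norm_nonneg _) (norm_nonneg _)]
  exact (h p hp n).trans (sub_le_self _ (he n))

theorem isBoundedUnder_norm (hx : IsFejerMonotone x F) (hF : F.Nonempty) :
    atTop.IsBoundedUnder (· ≤ ·) (norm ∘ x) := by
  obtain ⟨p, hp⟩ := hF
  refine isBoundedUnder_of ⟨dist (x 0) p + ‖p‖, fun n => ?_⟩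
  calc ‖x n‖ ≤ ‖x n - p‖ + ‖p‖ := norm_le_norm_sub_add _ _
    _ = dist (x n) p + ‖p‖ := by rw [dist_eq_norm]
    _ ≤ dist (x 0) p + ‖p‖ := by gcongr; exact hx.antitone_dist hp (Nat.zero_le n)

variable {H : Type*} [NormedAddCommGroup H] [InnerProductSpace ℝ H]
variable {x : ℕ → H} {F : Set H} {P : H → H}

theorem cauchySeq_metricProjection (hx : IsFejerMonotone x F) (hF : Convex ℝ F)
    (hP : IsMetricProjection P F) : CauchySeq fun n => P (x n) := by
  refine cauchySeq_of_dist_sq_le_sub (D := fun n => ‖x n - P (x n)‖ ^ 2)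
    (fun n => sq_nonneg _) fun m n hmn => ?_
  have hpyth := hP.norm_sub_sq_add_norm_sub_sq_le hF (x n) (hP (x m)).1
  have hmono : ‖x n - P (x m)‖ ≤ ‖x m - P (x m)‖ := by
    simpa only [dist_eq_norm] using hx.antitone_dist (hP (x m)).1 hmn
  have hmono_sq := pow_le_pow_left₀ (norm_nonneg _) hmono 2
  rw [dist_eq_norm]
  linarith

theorem eq_of_tendstoWeakly (hx : IsFejerMonotone x F) (hF : Convex ℝ F)
    (hP : IsMetricProjection P F) {l : Filter ℕ} [l.NeBot] (hl : l ≤ atTop) {p q : H}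
    (hp : Tendsto (fun n => P (x n)) l (𝓝 p)) (hq : TendstoWeakly x l q) (hqF : q ∈ F) :
    q = p := by
  have hdir : Tendsto (fun n => q - P (x n)) l (𝓝 (q - p)) := hp.const_sub q
  have hlim : Tendsto (fun n => ⟪x n - P (x n), q - P (x n)⟫) l (𝓝 ⟪q - p, q - p⟫) := by
    simp only [inner_sub_left _ _ (q - _)]
    exact (hq.inner_of_isBoundedUnder ((hx.isBoundedUnder_norm ⟨q, hqF⟩).mono hl) hdir).sub
      (hp.inner hdir)
  have hle : ⟪q - p, q - p⟫ ≤ 0 :=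
    le_of_tendsto' hlim fun n => hP.inner_sub_sub_nonpos hF (x n) hqF
  exact sub_eq_zero.1 (real_inner_self_nonpos.1 hle)

theorem exists_tendstoWeakly_and_tendsto_metricProjection [CompleteSpace H]
    (hx : IsFejerMonotone x F) (hF : Convex ℝ F) (hP : IsMetricProjection P F)
    (hcluster : ∀ (U : Ultrafilter ℕ) (q : H),
      (U : Filter ℕ) ≤ atTop → TendstoWeakly x U q → q ∈ F) :
    ∃ p ∈ F, TendstoWeakly x atTop p ∧ Tendsto (fun n => P (x n)) atTop (𝓝 p) := by
  obtain ⟨p, hp⟩ := cauchySeq_tendsto_of_complete (hx.cauchySeq_metricProjection hF hP)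
  have hlimit : ∀ U : Ultrafilter ℕ, (U : Filter ℕ) ≤ atTop → p ∈ F ∧ TendstoWeakly x U p := by
    intro U hU
    obtain ⟨q, hq⟩ := exists_tendstoWeakly_of_isBoundedUnder U
      ((hx.isBoundedUnder_norm ⟨_, (hP 0).1⟩).mono hU)
    have hqF : q ∈ F := hcluster U q hU hq
    obtain rfl := hx.eq_of_tendstoWeakly hF hP hU (hp.mono_left hU) hq hqF
    exact ⟨hqF, hq⟩
  refine ⟨p, (hlimit _ (Ultrafilter.of_le atTop)).1, fun u => ?_, hp⟩
  exact tendsto_iff_ultrafilter _ _ _ |>.2 fun U hU => (hlimit U hU).2 u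

end IsFejerMonotone

end Fejer

section StrictPseudocontraction

theorem eq_of_mul_norm_sub_sq_nonpos {E : Type*} [NormedAddCommGroup E] {m : ℝ} {u v : E}
    (hm : 0 < m) (h : m * ‖u - v‖ ^ 2 ≤ 0) : u = v := by
  have hsq : ‖u - v‖ ^ 2 = 0 := (nonpos_of_mul_nonpos_right h hm).antisymm (sq_nonneg _)
  exact sub_eq_zero.1 (norm_eq_zero.1 (pow_eq_zero_iff two_ne_zero |>.1 hsq))

/-- `S` is `k`-strictly pseudocontractive on `C`, with `C` playing the role of its domain. -/
def IsStrictPseudocontractionOn {E : Type*} [SeminormedAddCommGroup E] (k : ℝ) (S : E → E)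
    (C : Set E) : Prop :=
  ∀ x ∈ C, ∀ y ∈ C, ‖S x - S y‖ ^ 2 ≤ ‖x - y‖ ^ 2 + k * ‖(x - S x) - (y - S y)‖ ^ 2

theorem isStrictPseudocontractionOn_zero_iff {E : Type*} [SeminormedAddCommGroup E] {T : E → E}
    {C : Set E} : IsStrictPseudocontractionOn 0 T C ↔ LipschitzOnWith 1 T C := by
  simp only [IsStrictPseudocontractionOn, lipschitzOnWith_iff_norm_sub_le, zero_mul, add_zero,
    sq_le_sq₀ (norm_nonneg _) (norm_nonneg _), NNReal.coe_one, one_mul]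

variable {H : Type*} [NormedAddCommGroup H] [InnerProductSpace ℝ H]
variable {C : Set H} {k : ℝ} {S : H → H}

namespace IsStrictPseudocontractionOn

theorem mul_norm_sq_le_inner (hS : IsStrictPseudocontractionOn k S C) {x y : H} (hx : x ∈ C)
    (hy : y ∈ C) :
    (1 - k) * ‖(x - S x) - (y - S y)‖ ^ 2 ≤ 2 * ⟪x - y, (x - S x) - (y - S y)⟫ := by
  have h := hS x hx y hy
  rw [show S x - S y = (x - y) - ((x - S x) - (y - S y)) by abel, norm_sub_sq_real] at h
  linarith

theorem setOf_fixed_eq_iInter (hS : IsStrictPseudocontractionOn k S C) (hk : k < 1) :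
    {x ∈ C | S x = x} =
      C ∩ ⋂ z ∈ C, {p | ⟪z - S z, p⟫ ≤ ⟪z - S z, z⟫ - (1 - k) / 2 * ‖z - S z‖ ^ 2} := by
  ext p
  simp only [Set.mem_ofPred_eq, Set.mem_inter_iff, Set.mem_iInter]
  refine and_congr_right fun hp => ⟨fun hSp z hz => ?_, fun h => ?_⟩
  · have hmono := hS.mul_norm_sq_le_inner hz hp
    rw [hSp, sub_self, sub_zero, real_inner_comm, inner_sub_right] at hmono
    linarith
  · exact (eq_of_mul_norm_sub_sq_nonpos (half_pos (sub_pos.2 hk)) (by linarith [h p hp])).symm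

theorem convex_setOf_fixed (hS : IsStrictPseudocontractionOn k S C) (hk : k < 1)
    (hC : Convex ℝ C) : Convex ℝ {x ∈ C | S x = x} := by
  rw [hS.setOf_fixed_eq_iInter hk]
  exact hC.inter (convex_iInter₂ fun z _ => convex_halfSpace_le (innerₛₗ ℝ (z - S z)).isLinear _)

theorem sub_map_eq_of_tendstoWeakly (hS : IsStrictPseudocontractionOn k S C) (hk : k < 1)
    {ι : Type*} {l : Filter ι} [l.NeBot] {x : ι → H} {q v : H} (hmem : ∀ᶠ i in l, x i ∈ C)
    (hbdd : l.IsBoundedUnder (· ≤ ·) (norm ∘ x)) (hqC : q ∈ C) (hq : TendstoWeakly x l q)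
    (hres : Tendsto (fun i => x i - S (x i)) l (𝓝 v)) : q - S q = v := by
  have hdiff := hres.sub_const (q - S q)
  have hinner : Tendsto (fun i => 2 * ⟪x i - q, (x i - S (x i)) - (q - S q)⟫) l (𝓝 0) := by
    simp only [inner_sub_left (x _)]
    simpa only [sub_self, mul_zero] using ((hq.inner_of_isBoundedUnder hbdd hdiff).sub
      (tendsto_const_nhds (x := q) |>.inner hdiff)).const_mul 2
  have hle : (1 - k) * ‖v - (q - S q)‖ ^ 2 ≤ 0 :=
    le_of_tendsto_of_tendsto ((hdiff.norm.pow 2).const_mul (1 - k)) hinner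
      (hmem.mono fun i hi => hS.mul_norm_sq_le_inner hi hqC)
  exact (eq_of_mul_norm_sub_sq_nonpos (sub_pos.2 hk) hle).symm

theorem mem_setOf_fixed_of_tendstoWeakly [CompleteSpace H] (hS : IsStrictPseudocontractionOn k S C)
    (hk : k < 1) (hcl : IsClosed C) (hcv : Convex ℝ C) {ι : Type*} {l : Filter ι} [l.NeBot]
    {x : ι → H} {q : H} (hmem : ∀ᶠ i in l, x i ∈ C) (hbdd : l.IsBoundedUnder (· ≤ ·) (norm ∘ x))
    (hq : TendstoWeakly x l q) (hres : Tendsto (fun i => x i - S (x i)) l (𝓝 0)) :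
    q ∈ {x ∈ C | S x = x} := by
  have hqC := hq.mem_of_isClosed_of_convex hcl hcv hmem
  exact ⟨hqC, (sub_eq_zero.1 (hS.sub_map_eq_of_tendstoWeakly hk hmem hbdd hqC hq hres)).symm⟩

end IsStrictPseudocontractionOn

end StrictPseudocontraction

section Iteration

variable {E : Type*} [AddCommGroup E] [Module ℝ E] {C : Set E} {S T : E → E} {r t : ℝ}

/-- The composition of `T` with the relaxation `(1 - t) I + t S` of `S`. -/
def relaxedComp (T S : E → E) (t : ℝ) (u : E) : E :=
  T ((1 - t) • u + t • S u)

/-- One step `x n ↦ x (n + 1)` of the iteration, with `r = α_n` and `t = λ_n`. -/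
def nestedStep (T S : E → E) (r t : ℝ) (u : E) : E :=
  relaxedComp T S t (r • u + (1 - r) • relaxedComp T S t u)

theorem mapsTo_relaxation (hC : Convex ℝ C) (hS : Set.MapsTo S C C) (ht : t ∈ Set.Icc 0 1) :
    Set.MapsTo (fun u => (1 - t) • u + t • S u) C C :=
  fun _ hu => hC hu (hS hu) (sub_nonneg.2 ht.2) ht.1 (sub_add_cancel 1 t)

theorem mapsTo_relaxedComp (hC : Convex ℝ C) (hT : Set.MapsTo T C C) (hS : Set.MapsTo S C C)
    (ht : t ∈ Set.Icc 0 1) : Set.MapsTo (relaxedComp T S t) C C :=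
  hT.comp (mapsTo_relaxation hC hS ht)

theorem mapsTo_average_relaxedComp (hC : Convex ℝ C) (hT : Set.MapsTo T C C)
    (hS : Set.MapsTo S C C) (hr : r ∈ Set.Icc 0 1) (ht : t ∈ Set.Icc 0 1) :
    Set.MapsTo (fun u => r • u + (1 - r) • relaxedComp T S t u) C C :=
  fun _ hu => hC hu (mapsTo_relaxedComp hC hT hS ht hu) hr.1 (sub_nonneg.2 hr.2)
    (add_sub_cancel r 1)

theorem mapsTo_nestedStep (hC : Convex ℝ C) (hT : Set.MapsTo T C C) (hS : Set.MapsTo S C C)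
    (hr : r ∈ Set.Icc 0 1) (ht : t ∈ Set.Icc 0 1) : Set.MapsTo (nestedStep T S r t) C C :=
  (mapsTo_relaxedComp hC hT hS ht).comp (mapsTo_average_relaxedComp hC hT hS hr ht)

end Iteration

section Descent

theorem norm_sub_le_norm_sub_relaxedComp_add {E : Type*} [SeminormedAddCommGroup E]
    [NormedSpace ℝ E] {C : Set E} {S T : E → E} {t : ℝ} {u : E} (hT : LipschitzOnWith 1 T C)
    (hu : u ∈ C) (hmem : (1 - t) • u + t • S u ∈ C) :
    ‖u - T u‖ ≤ ‖u - relaxedComp T S t u‖ + |t| * ‖u - S u‖ := by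
  calc ‖u - T u‖ ≤ ‖u - relaxedComp T S t u‖ + ‖relaxedComp T S t u - T u‖ :=
        norm_sub_le_norm_sub_add_norm_sub _ _ _
    _ ≤ ‖u - relaxedComp T S t u‖ + ‖(1 - t) • u + t • S u - u‖ := by
        gcongr
        simpa only [relaxedComp, NNReal.coe_one, one_mul] using hT.norm_sub_le hmem hu
    _ = ‖u - relaxedComp T S t u‖ + |t| * ‖u - S u‖ := by
        rw [show (1 - t) • u + t • S u - u = -(t • (u - S u)) by module, norm_neg, norm_smul,
          Real.norm_eq_abs]

variable {H : Type*} [SeminormedAddCommGroup H] [InnerProductSpace ℝ H]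

theorem norm_smul_add_smul_sub_sq {s t : ℝ} (hst : s + t = 1) (u v p : H) :
    ‖s • u + t • v - p‖ ^ 2 = s * ‖u - p‖ ^ 2 + t * ‖v - p‖ ^ 2 - s * t * ‖u - v‖ ^ 2 := by
  obtain rfl := eq_sub_of_add_eq hst
  rw [show (1 - t) • u + t • v - p = (1 - t) • (u - p) + t • (v - p) by module,
    ← sub_sub_sub_cancel_right u v p, norm_add_sq_real, norm_sub_sq_real (u - p), norm_smul,
    norm_smul, mul_pow, mul_pow, Real.norm_eq_abs, Real.norm_eq_abs, sq_abs, sq_abs,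
    real_inner_smul_left, real_inner_smul_right]
  ring

variable {C : Set H} {k r t : ℝ} {S T : H → H} {u p : H}

theorem IsStrictPseudocontractionOn.norm_relaxation_sub_sq_le
    (hS : IsStrictPseudocontractionOn k S C) (ht : 0 ≤ t) (hu : u ∈ C) (hp : p ∈ C)
    (hSp : S p = p) :
    ‖(1 - t) • u + t • S u - p‖ ^ 2 ≤ ‖u - p‖ ^ 2 - t * (1 - k - t) * ‖u - S u‖ ^ 2 := by
  have h := hS u hu p hp
  rw [hSp, sub_self, sub_zero] at h
  rw [norm_smul_add_smul_sub_sq (sub_add_cancel 1 t)]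
  linear_combination t * h

theorem norm_relaxedComp_sub_sq_le (hT : LipschitzOnWith 1 T C)
    (hS : IsStrictPseudocontractionOn k S C) (ht : 0 ≤ t) (hu : u ∈ C)
    (hmem : (1 - t) • u + t • S u ∈ C) (hp : p ∈ C) (hTp : T p = p) (hSp : S p = p) :
    ‖relaxedComp T S t u - p‖ ^ 2 ≤ ‖u - p‖ ^ 2 - t * (1 - k - t) * ‖u - S u‖ ^ 2 := by
  have hle : ‖relaxedComp T S t u - p‖ ≤ ‖(1 - t) • u + t • S u - p‖ := by
    simpa only [relaxedComp, NNReal.coe_one, one_mul, hTp] using hT.norm_sub_le hmem hp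
  exact (pow_le_pow_left₀ (norm_nonneg _) hle 2).trans
    (hS.norm_relaxation_sub_sq_le ht hu hp hSp)

theorem norm_nestedStep_sub_sq_le (hC : Convex ℝ C) (hTmaps : Set.MapsTo T C C)
    (hT : LipschitzOnWith 1 T C) (hSmaps : Set.MapsTo S C C)
    (hS : IsStrictPseudocontractionOn k S C) (hk : 0 ≤ k) (hr : r ∈ Set.Icc 0 1)
    (ht : t ∈ Set.Icc 0 (1 - k)) (hu : u ∈ C) (hp : p ∈ C) (hTp : T p = p) (hSp : S p = p) :
    ‖nestedStep T S r t u - p‖ ^ 2 ≤ ‖u - p‖ ^ 2 - (1 - r) * (t * (1 - k - t)) * ‖u - S u‖ ^ 2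
      - r * (1 - r) * ‖u - relaxedComp T S t u‖ ^ 2 := by
  have ht' : t ∈ Set.Icc 0 1 := ⟨ht.1, ht.2.trans (sub_le_self 1 hk)⟩
  have hrelax : ∀ v ∈ C, (1 - t) • v + t • S v ∈ C := mapsTo_relaxation hC hSmaps ht'
  set y := r • u + (1 - r) • relaxedComp T S t u with hy
  have hyC : y ∈ C := mapsTo_average_relaxedComp hC hTmaps hSmaps hr ht' hu
  have hcoef : 0 ≤ t * (1 - k - t) := mul_nonneg ht.1 (sub_nonneg.2 ht.2)
  have houter : ‖nestedStep T S r t u - p‖ ^ 2 ≤ ‖y - p‖ ^ 2 :=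
    (norm_relaxedComp_sub_sq_le hT hS ht.1 hyC (hrelax y hyC) hp hTp hSp).trans
      (sub_le_self _ (mul_nonneg hcoef (sq_nonneg _)))
  have hinner := norm_relaxedComp_sub_sq_le hT hS ht.1 hu (hrelax u hu) hp hTp hSp
  have hr' : 0 ≤ 1 - r := sub_nonneg.2 hr.2
  rw [hy, norm_smul_add_smul_sub_sq (add_sub_cancel r 1)] at houter
  linear_combination houter + (1 - r) * hinner

theorem exists_pos_norm_nestedStep_sub_sq_le (hC : Convex ℝ C) (hTmaps : Set.MapsTo T C C)
    (hT : LipschitzOnWith 1 T C) (hSmaps : Set.MapsTo S C C)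
    (hS : IsStrictPseudocontractionOn k S C) (hk : 0 ≤ k) {a b c d : ℝ} (ha : 0 < a)
    (hb : b < 1 - k) (hc : 0 < c) (hd : d < 1) :
    ∃ μ > 0, ∀ r ∈ Set.Icc c d, ∀ t ∈ Set.Icc a b, ∀ u ∈ C, ∀ p ∈ C, T p = p → S p = p →
      ‖nestedStep T S r t u - p‖ ^ 2 ≤ ‖u - p‖ ^ 2 - μ * (‖u - S u‖ ^ 2 + ‖u - T u‖ ^ 2) := by
  have hd' : 0 < 1 - d := sub_pos.2 hd
  have hb' : 0 < 1 - k - b := sub_pos.2 hb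
  set m := min ((1 - d) * (a * (1 - k - b))) (c * (1 - d))
  have hmpos : 0 < m := by positivity
  refine ⟨m / 3, div_pos hmpos three_pos, fun r hr t ht u hu p hp hTp hSp => ?_⟩
  have ht0 : 0 ≤ t := ha.le.trans ht.1
  have ht1 : t ≤ 1 := by linarith [ht.2]
  have hr1 : 1 - d ≤ 1 - r := sub_le_sub_left hr.2 1
  have hmS : m ≤ (1 - r) * (t * (1 - k - t)) := (min_le_left _ _).trans
    (mul_le_mul hr1 (mul_le_mul ht.1 (by linarith [ht.2]) hb'.le ht0) (by positivity)
      (hd'.le.trans hr1))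
  have hmT : m ≤ r * (1 - r) := (min_le_right _ _).trans
    (mul_le_mul hr.1 hr1 hd'.le (hc.le.trans hr.1))
  have hstep := norm_nestedStep_sub_sq_le hC hTmaps hT hSmaps hS hk
    ⟨hc.le.trans hr.1, hr.2.trans hd.le⟩ ⟨ht0, ht.2.trans hb.le⟩ hu hp hTp hSp
  have htri : ‖u - T u‖ ≤ ‖u - relaxedComp T S t u‖ + ‖u - S u‖ :=
    (norm_sub_le_norm_sub_relaxedComp_add hT hu (mapsTo_relaxation hC hSmaps ⟨ht0, ht1⟩ hu)).trans
      (add_le_add_right (mul_le_of_le_one_left (norm_nonneg _) (by rwa [abs_of_nonneg ht0])) _)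
  have hsq : ‖u - T u‖ ^ 2 ≤ 2 * (‖u - relaxedComp T S t u‖ ^ 2 + ‖u - S u‖ ^ 2) :=
    (pow_le_pow_left₀ (norm_nonneg _) htri 2).trans add_sq_le
  have hcompare : m / 3 * (‖u - S u‖ ^ 2 + ‖u - T u‖ ^ 2) ≤
      m * ‖u - S u‖ ^ 2 + m * ‖u - relaxedComp T S t u‖ ^ 2 := by
    linear_combination m / 3 * hsq + m / 3 * sq_nonneg ‖u - relaxedComp T S t u‖
  linear_combination hstep + hcompare + ‖u - S u‖ ^ 2 * hmS
    + ‖u - relaxedComp T S t u‖ ^ 2 * hmT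

end Descent

section Convergence

theorem forall_mem_of_mapsTo {X : Type*} {C : Set X} {f : ℕ → X → X} {x : ℕ → X}
    (hf : ∀ n, Set.MapsTo (f n) C C) (hx0 : x 0 ∈ C) (hx : ∀ n, x (n + 1) = f n (x n)) (n : ℕ) :
    x n ∈ C := by
  induction n with
  | zero => exact hx0
  | succ n ih => exact hx n ▸ hf n ih

theorem exists_tendstoWeakly_and_tendsto_of_norm_sq_descent {H : Type*} [NormedAddCommGroup H]
    [InnerProductSpace ℝ H] [CompleteSpace H] {C F : Set H} {S T P : H → H} {j k μ : ℝ} {x : ℕ → H}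
    (hCcl : IsClosed C) (hCcv : Convex ℝ C) (hT : IsStrictPseudocontractionOn j T C) (hj : j < 1)
    (hS : IsStrictPseudocontractionOn k S C) (hk : k < 1)
    (hF : F = {x ∈ C | T x = x} ∩ {x ∈ C | S x = x}) (hP : IsMetricProjection P F)
    (hxC : ∀ n, x n ∈ C) (hμ : 0 < μ)
    (hdescent : ∀ p ∈ F, ∀ n, ‖x (n + 1) - p‖ ^ 2 ≤
      ‖x n - p‖ ^ 2 - μ * (‖x n - S (x n)‖ ^ 2 + ‖x n - T (x n)‖ ^ 2)) :
    ∃ p ∈ F, TendstoWeakly x atTop p ∧ Tendsto (fun n => P (x n)) atTop (𝓝 p) := by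
  have hp₀ : P 0 ∈ F := (hP 0).1
  have hFejer : IsFejerMonotone x F := .of_norm_sq_le_sub (fun n => by positivity) hdescent
  have hbdd := hFejer.isBoundedUnder_norm ⟨P 0, hp₀⟩
  have hresT : Tendsto (fun n => x n - T (x n)) atTop (𝓝 0) :=
    tendsto_zero_of_mul_norm_sq_le_sub (D := fun n => ‖x n - P 0‖ ^ 2) hμ (fun n => sq_nonneg _)
      fun n => by linear_combination hdescent _ hp₀ n + μ * sq_nonneg ‖x n - S (x n)‖
  have hresS : Tendsto (fun n => x n - S (x n)) atTop (𝓝 0) :=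
    tendsto_zero_of_mul_norm_sq_le_sub (D := fun n => ‖x n - P 0‖ ^ 2) hμ (fun n => sq_nonneg _)
      fun n => by linear_combination hdescent _ hp₀ n + μ * sq_nonneg ‖x n - T (x n)‖
  have hFcv : Convex ℝ F :=
    hF ▸ (hT.convex_setOf_fixed hj hCcv).inter (hS.convex_setOf_fixed hk hCcv)
  refine hFejer.exists_tendstoWeakly_and_tendsto_metricProjection hFcv hP fun U q hU hq => ?_
  rw [hF]
  exact ⟨hT.mem_setOf_fixed_of_tendstoWeakly hj hCcl hCcv (.of_forall hxC) (hbdd.mono hU) hq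
      (hresT.mono_left hU),
    hS.mem_setOf_fixed_of_tendstoWeakly hk hCcl hCcv (.of_forall hxC) (hbdd.mono hU) hq
      (hresS.mono_left hU)⟩

end Convergence

theorem stmt_2
    {H : Type*} [NormedAddCommGroup H] [InnerProductSpace ℝ H] [CompleteSpace H]
    (C : Set H) (hCne : C.Nonempty) (hCcl : IsClosed C) (hCcv : Convex ℝ C)
    (T : H → H) (hTmaps : Set.MapsTo T C C)
    (hT : ∀ x ∈ C, ∀ y ∈ C, ‖T x - T y‖ ≤ ‖x - y‖)
    (k : ℝ) (hk0 : 0 ≤ k) (hk1 : k < 1)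
    (S : H → H) (hSmaps : Set.MapsTo S C C)
    (hS : ∀ x ∈ C, ∀ y ∈ C,
      ‖S x - S y‖ ^ 2 ≤ ‖x - y‖ ^ 2 + k * ‖(x - S x) - (y - S y)‖ ^ 2)
    (F : Set H)
    (hF : F = {x ∈ C | T x = x} ∩ {x ∈ C | S x = x})
    (hFne : F.Nonempty)
    (a b c d : ℝ) (ha : 0 < a) (hab : a ≤ b) (hb : b < 1 - k)
    (hc : 0 < c) (hcd : c ≤ d) (hd : d < 1)
    (lam : ℕ → ℝ) (hlam : ∀ n, lam n ∈ Set.Icc a b)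
    (alp : ℕ → ℝ) (halp : ∀ n, alp n ∈ Set.Icc c d)
    (x y : ℕ → H) (hx0 : x 0 ∈ C)
    (hy : ∀ n, y n = alp n • x n
      + (1 - alp n) • T ((1 - lam n) • x n + lam n • S (x n)))
    (hx : ∀ n, x (n + 1) = T ((1 - lam n) • y n + lam n • S (y n)))
    (PF : H → H) (hPF : ∀ u : H, PF u ∈ F ∧ ∀ w ∈ F, ‖u - PF u‖ ≤ ‖u - w‖) :
    ∃ p ∈ F,
      (∀ u : H, Tendsto (fun n => ⟪x n, u⟫) atTop (𝓝 ⟪p, u⟫)) ∧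
      Tendsto (fun n => PF (x n)) atTop (𝓝 p) := by
  have hTlip : LipschitzOnWith 1 T C := by
    simpa only [lipschitzOnWith_iff_norm_sub_le, NNReal.coe_one, one_mul] using hT
  have hstep : ∀ n, x (n + 1) = nestedStep T S (alp n) (lam n) (x n) := fun n => by
    rw [hx, hy, nestedStep, relaxedComp, relaxedComp]
  have halp01 : ∀ n, alp n ∈ Set.Icc 0 1 := fun n => Set.Icc_subset_Icc hc.le hd.le (halp n)
  have hlam01 : ∀ n, lam n ∈ Set.Icc 0 1 := fun n =>
    Set.Icc_subset_Icc ha.le (by linarith) (hlam n)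
  have hxC : ∀ n, x n ∈ C := forall_mem_of_mapsTo
    (fun n => mapsTo_nestedStep hCcv hTmaps hSmaps (halp01 n) (hlam01 n)) hx0 hstep
  obtain ⟨μ, hμ, hdescent⟩ :=
    exists_pos_norm_nestedStep_sub_sq_le hCcv hTmaps hTlip hSmaps hS hk0 ha hb hc hd
  refine exists_tendstoWeakly_and_tendsto_of_norm_sq_descent hCcl hCcv
    (isStrictPseudocontractionOn_zero_iff.2 hTlip) one_pos hS hk1 hF hPF hxC hμ fun p hp n => ?_
  obtain ⟨⟨hpC, hTp⟩, -, hSp⟩ := hF ▸ hp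
  rw [hstep]
  exact hdescent _ (halp n) _ (hlam n) _ (hxC n) p hpC hTp hSp
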